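/- Let ε ∈ (0,1), p ∈ {1,…,n−1}, δ = ε·a_p/(3n), and a'_i = ⌊a_i/δ⌋ for each i. Then for any nonempty disjoint index sets S_1^*, S_2^* ⊆ {1,…,n} with max S_1^* ≥ p and max S_2^* ≥ p: MR(S_1^*, S_2^*, A') ≤ (1 + ε/2)·MR(S_1^*, S_2^*, A), where ratios with respect to A' are computed using the values a'_i in place of a_i. -/

import Mathlib

open Finset

/-- Ratio of the sums of two index sets, with weights `f`. -/
noncomputable def ssrR (f : ℕ → ℝ) (S₁ S₂ : Finset ℕ) : ℝ :=
  (∑ i ∈ S₁, f i) / (∑ j ∈ S₂, f j)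

/-- Max ratio of the sums of two index sets, with weights `f`. -/
noncomputable def ssrMR (f : ℕ → ℝ) (S₁ S₂ : Finset ℕ) : ℝ :=
  max (ssrR f S₁ S₂) (ssrR f S₂ S₁)

/-- Feasibility for the Semi-Restricted SSR instance `(A, p)`:
`S₁, S₂ ⊆ {1,…,n}` are nonempty, disjoint, `max S₁ = p` and `max S₂ > p`. -/
def SemiFeasible (n p : ℕ) (S₁ S₂ : Finset ℕ) : Prop :=
  S₁ ⊆ Finset.Icc 1 n ∧ S₂ ⊆ Finset.Icc 1 n ∧ S₁.Nonempty ∧ S₂.Nonempty ∧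
    Disjoint S₁ S₂ ∧ S₁.max = (p : WithBot ℕ) ∧ (p : WithBot ℕ) < S₂.max


theorem ssr_aux (n : ℕ) (a : ℕ → ℕ)
    (hpos : ∀ i ∈ Finset.Icc 1 n, 0 < a i)
    (hmono : StrictMonoOn a (Finset.Icc 1 n))
    (ε : ℝ) (hε0 : 0 < ε) (hε1 : ε < 1)
    (p : ℕ) (hp1 : 1 ≤ p) (hpn : p < n)
    (δ : ℝ) (hδ : δ = ε * (a p : ℝ) / (3 * n))
    (a' : ℕ → ℤ) (ha' : ∀ i, a' i = ⌊(a i : ℝ) / δ⌋)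
    (S₁ S₂ : Finset ℕ)
    (hsub₂ : S₂ ⊆ Finset.Icc 1 n)
    (hne₂ : S₂.Nonempty)
    (hmax₂ : p ≤ S₂.max' hne₂) :
    ssrR (fun i => (a' i : ℝ)) S₁ S₂ ≤
      (1 + ε / 2) * ssrR (fun i => (a i : ℝ)) S₁ S₂ := by
  unfold ssrR
  have hpm : p ∈ Finset.Icc 1 n := Finset.mem_Icc.2 ⟨hp1, hpn.le⟩
  have hap : (0 : ℝ) < a p := by exact_mod_cast hpos p hpm
  have hn : (0 : ℝ) < n := by exact_mod_cast (by omega : 0 < n)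
  have hδ0 : 0 < δ := by rw [hδ]; positivity
  have hnδ : n * δ = ε * a p / 3 := by rw [hδ]; field_simp
  have hm := S₂.max'_mem hne₂
  have h1 : (a p : ℝ) ≤ ∑ j ∈ S₂, (a j : ℝ) := by
    have h2 : a p ≤ a (S₂.max' hne₂) :=
      hmono.monotoneOn (by exact_mod_cast hpm) (by exact_mod_cast hsub₂ hm) hmax₂
    have h3 := Finset.single_le_sum (f := fun j => (a j : ℝ)) (fun i _ => by positivity) hm
    have h4 : (a p : ℝ) ≤ a (S₂.max' hne₂) := by exact_mod_cast h2
    exact h4.trans h3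
  have hcard : (S₂.card : ℝ) ≤ n := by
    have := Finset.card_le_card hsub₂
    simp at this
    exact_mod_cast this
  have hU : δ * ∑ i ∈ S₁, (a' i : ℝ) ≤ ∑ i ∈ S₁, (a i : ℝ) := by
    rw [Finset.mul_sum]
    refine Finset.sum_le_sum fun i _ => ?_
    rw [ha', mul_comm, ← le_div_iff₀ hδ0]
    exact Int.floor_le _
  have hL : ∑ i ∈ S₂, (a i : ℝ) - S₂.card * δ ≤ δ * ∑ i ∈ S₂, (a' i : ℝ) := by
    have : ∑ i ∈ S₂, (a i : ℝ) ≤ ∑ i ∈ S₂, (δ * (a' i : ℝ) + δ) := by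
      refine Finset.sum_le_sum fun i _ => ?_
      have := (Int.lt_floor_add_one ((a i : ℝ) / δ)).le
      rw [← ha', div_le_iff₀ hδ0] at this
      linarith
    rw [Finset.sum_add_distrib, ← Finset.mul_sum] at this
    simp at this
    linarith
  have hX : 0 ≤ ∑ i ∈ S₁, (a i : ℝ) := Finset.sum_nonneg fun i _ => by positivity
  generalize ∑ i ∈ S₁, (a i : ℝ) = X at *
  generalize ∑ i ∈ S₂, (a i : ℝ) = Y at *
  generalize ∑ i ∈ S₁, (a' i : ℝ) = X' at *
  generalize ∑ i ∈ S₂, (a' i : ℝ) = Y' at *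
  have hY : 0 < Y := hap.trans_le h1
  have hL2 : Y * (1 - ε / 3) ≤ δ * Y' := by
    have := mul_le_mul_of_nonneg_right hcard hδ0.le
    have := mul_le_mul_of_nonneg_left h1 hε0.le
    linarith
  have hd : 0 < Y * (1 - ε / 3) := mul_pos hY (by linarith)
  calc X' / Y' = (δ * X') / (δ * Y') := by rw [mul_div_mul_left _ _ hδ0.ne']
    _ ≤ X / (Y * (1 - ε / 3)) := div_le_div₀ hX hU hd hL2
    _ ≤ (1 + ε / 2) * (X / Y) := by
      rw [div_le_iff₀ hd]
      have : (1 + ε / 2) * (X / Y) * (Y * (1 - ε / 3)) = X * ((1 + ε / 2) * (1 - ε / 3)) := by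
        field_simp
      rw [this]
      exact le_mul_of_one_le_right hX (by nlinarith)

/-- with `δ = ε·a_p/(3n)` and scaled values `a'_i = ⌊a_i/δ⌋`, for nonempty
disjoint `S₁*, S₂* ⊆ {1,…,n}` with `max S₁* ≥ p` and `max S₂* ≥ p`:
`MR(S₁*, S₂*, A') ≤ (1 + ε/2)·MR(S₁*, S₂*, A)`. -/
theorem stmt10 (n : ℕ) (a : ℕ → ℕ)
    (hpos : ∀ i ∈ Finset.Icc 1 n, 0 < a i)
    (hmono : StrictMonoOn a (Finset.Icc 1 n))
    (ε : ℝ) (hε0 : 0 < ε) (hε1 : ε < 1)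
    (p : ℕ) (hp1 : 1 ≤ p) (hpn : p < n)
    (δ : ℝ) (hδ : δ = ε * (a p : ℝ) / (3 * n))
    (a' : ℕ → ℤ) (ha' : ∀ i, a' i = ⌊(a i : ℝ) / δ⌋)
    (S₁ S₂ : Finset ℕ)
    (hsub₁ : S₁ ⊆ Finset.Icc 1 n) (hsub₂ : S₂ ⊆ Finset.Icc 1 n)
    (hne₁ : S₁.Nonempty) (hne₂ : S₂.Nonempty) (hdisj : Disjoint S₁ S₂)
    (hmax₁ : p ≤ S₁.max' hne₁) (hmax₂ : p ≤ S₂.max' hne₂) :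
    ssrMR (fun i => (a' i : ℝ)) S₁ S₂ ≤
      (1 + ε / 2) * ssrMR (fun i => (a i : ℝ)) S₁ S₂ := by
  have h1 := ssr_aux n a hpos hmono ε hε0 hε1 p hp1 hpn δ hδ a' ha' S₁ S₂ hsub₂ hne₂ hmax₂
  have h2 := ssr_aux n a hpos hmono ε hε0 hε1 p hp1 hpn δ hδ a' ha' S₂ S₁ hsub₁ hne₁ hmax₁
  have h0 : 0 ≤ 1 + ε / 2 := by linarith
  unfold ssrMR
  exact max_le (h1.trans (mul_le_mul_of_nonneg_left (le_max_left _ _) h0))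
    (h2.trans (mul_le_mul_of_nonneg_left (le_max_right _ _) h0))
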